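/- Let ι be a finite index type, d ∈ ℕ, let (ρ_a)_{a∈ι} be a family of positive semidefinite d×d complex matrices, let ρ be the block-diagonal matrix on ι × Fin d with a-th diagonal block ρ_a, and set σ_E := Σ_{a∈ι} ρ_a. Let t ∈ (0,1]. Then for every complex matrix Z indexed by ι × Fin d with blocks Z_{(a,b)}, the (real) quantity Re Tr[ρ(Z+Z^†)] + (1−t)·Tr[ρ Z^†Z] + t·Tr[(I_ι ⊗ σ_E) Z Z^†] is at least Σ_{a∈ι} ( Re Tr[ρ_a (Z_{(a,a)} + Z_{(a,a)}^†)] + (1−t)·Tr[ρ_a Z_{(a,a)}^† Z_{(a,a)}] + t·Tr[σ_E Z_{(a,a)} Z_{(a,a)}^†] ). In particular, in the infimum of this objective over all Z one may restrict to block-diagonal Z = Σ_a |a⟩⟨a| ⊗ Z_a without increasing the value. -/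

import Mathlib

open Matrix ComplexOrder

/-!
Since `ρ` and `σ` are block diagonal, their traces against a matrix only see its diagonal blocks.
The linear term therefore does not change when `Z` is replaced by its block-diagonal part. The
`a`-th diagonal block of `Zᴴ * Z` is `∑ b, (Z_{ba})ᴴ * Z_{ba}`, which dominates its single summand
`b = a` in the Loewner order, and likewise for `Z * Zᴴ`; tracing against positive semidefinite
matrices with the nonnegative weights `1 - t` and `t` preserves these inequalities.
-/

theorem sum_eq_sum_comp_add_sum_notMem_range {l m M : Type*} [Fintype l] [Fintype m]
    [AddCommMonoid M] {e : l → m} [DecidablePred (· ∈ Set.range e)] (he : e.Injective)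
    (f : m → M) :
    ∑ x, f x = ∑ y, f (e y) + ∑ x : {x // x ∉ Set.range e}, f x := by
  rw [← Fintype.sum_subtype_add_sum_subtype (· ∈ Set.range e)]
  congr 1
  exact ((Equiv.ofInjective e he).sum_comp fun x => f x).symm

section Trace

variable {R m n : Type*} [Fintype m] [Fintype n]

theorem trace_submatrix_equiv [AddCommMonoid R] (A : Matrix m m R) (e : n ≃ m) :
    (A.submatrix e e).trace = A.trace :=
  e.sum_comp fun i => A i i

variable {ι : Type*} [Fintype ι] [DecidableEq ι] {k : ι → Type*} [∀ a, Fintype (k a)]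

theorem trace_blockDiagonal'_mul [NonUnitalNonAssocSemiring R]
    (M : ∀ a, Matrix (k a) (k a) R) (W : Matrix (Σ a, k a) (Σ a, k a) R) :
    (blockDiagonal' M * W).trace = ∑ a, (M a * blockDiag' W a).trace := by
  simp only [trace, diag_apply, mul_apply, Fintype.sum_sigma, blockDiag'_apply]
  refine Finset.sum_congr rfl fun a _ => Finset.sum_congr rfl fun i _ => ?_
  rw [Fintype.sum_eq_single a fun b hba => ?_]
  · simp only [blockDiagonal'_apply_eq]
  · simp only [blockDiagonal'_apply_ne M _ _ hba.symm, zero_mul, Finset.sum_const_zero]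

end Trace

theorem submatrix_sigmaEquivProd_eq_blockDiagonal' {R ι n : Type*} [Zero R] [DecidableEq ι]
    (M : ι → Matrix n n R) :
    (of fun p q : ι × n => if p.1 = q.1 then M p.1 p.2 q.2 else 0).submatrix
      (Equiv.sigmaEquivProd ι n) (Equiv.sigmaEquivProd ι n) = blockDiagonal' M := by
  ext ⟨a, i⟩ ⟨b, j⟩
  rw [← blockDiagonal'_eq_blockDiagonal, blockDiagonal_apply]
  rfl

section Loewner

open scoped MatrixOrder

variable {𝕜 : Type*} [RCLike 𝕜] {l m n : Type*} [Fintype l] [Fintype m]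

theorem conjTranspose_mul_self_submatrix_le [Finite n] {e : l → m} (he : e.Injective)
    (B : Matrix m n 𝕜) :
    (B.submatrix e id)ᴴ * B.submatrix e id ≤ Bᴴ * B := by
  classical
  let C : Matrix {x // x ∉ Set.range e} n 𝕜 := B.submatrix Subtype.val id
  have split_rows : Bᴴ * B = (B.submatrix e id)ᴴ * B.submatrix e id + Cᴴ * C := by
    ext i j
    simp only [Matrix.add_apply, mul_apply, conjTranspose_apply]
    exact sum_eq_sum_comp_add_sum_notMem_range he fun x => star (B x i) * B x j
  rw [split_rows]
  exact le_add_of_nonneg_right (posSemidef_conjTranspose_mul_self C).nonneg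

theorem blockDiag'_conjTranspose_mul_self_le {ι : Type*} [Fintype ι] {k : ι → Type*}
    [∀ a, Fintype (k a)] (Z : Matrix (Σ a, k a) (Σ a, k a) 𝕜) (a : ι) :
    (blockDiag' Z a)ᴴ * blockDiag' Z a ≤ blockDiag' (Zᴴ * Z) a :=
  conjTranspose_mul_self_submatrix_le sigma_mk_injective (Z.submatrix id (Sigma.mk a))

theorem trace_mul_nonneg_of_posSemidef {P Q : Matrix m m 𝕜} (hP : P.PosSemidef)
    (hQ : Q.PosSemidef) : 0 ≤ (P * Q).trace := by
  classical
  obtain ⟨C, rfl⟩ := CStarAlgebra.nonneg_iff_eq_star_mul_self.mp hQ.nonneg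
  rw [star_eq_conjTranspose, ← Matrix.mul_assoc, trace_mul_comm, ← Matrix.mul_assoc]
  exact (hP.mul_mul_conjTranspose_same C).trace_nonneg

theorem re_trace_mul_le_re_trace_mul {P A B : Matrix m m 𝕜} (hP : P.PosSemidef) (hAB : A ≤ B) :
    RCLike.re (P * A).trace ≤ RCLike.re (P * B).trace := by
  have trace_diff_nonneg : 0 ≤ (P * (B - A)).trace :=
    trace_mul_nonneg_of_posSemidef hP (le_iff.mp hAB)
  rw [Matrix.mul_sub, trace_sub, sub_nonneg] at trace_diff_nonneg
  exact RCLike.re_monotone trace_diff_nonneg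

end Loewner

section Objective

variable {𝕜 : Type*} [RCLike 𝕜] {m n : Type*} [Fintype m] [Fintype n]

/-- The Brown–Fawzi–Fawzi objective
`Tr[ρ (Z + Z†)] + (1 - t) Tr[ρ Z† Z] + t Tr[σ Z Z†]` at a single quadrature node `t`, minimised over
`Z` to bound a conditional entropy. The matrix `σ` plays the role of `I ⊗ ρ_E`. Real parts are
taken termwise, so that the value is a real number for arbitrary `ρ` and `σ`. -/
noncomputable def bffObjective (t : ℝ) (ρ σ Z : Matrix m m 𝕜) : ℝ :=
  RCLike.re (ρ * (Z + Zᴴ)).trace + (1 - t) * RCLike.re (ρ * (Zᴴ * Z)).trace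
    + t * RCLike.re (σ * (Z * Zᴴ)).trace

theorem bffObjective_submatrix_equiv (t : ℝ) (ρ σ Z : Matrix m m 𝕜) (e : n ≃ m) :
    bffObjective t (ρ.submatrix e e) (σ.submatrix e e) (Z.submatrix e e) =
      bffObjective t ρ σ Z := by
  have submatrix_sum : Z.submatrix e e + Zᴴ.submatrix e e = (Z + Zᴴ).submatrix e e := rfl
  simp only [bffObjective, conjTranspose_submatrix, submatrix_sum, submatrix_mul_equiv,
    trace_submatrix_equiv]

variable {ι : Type*} [Fintype ι] [DecidableEq ι] {k : ι → Type*} [∀ a, Fintype (k a)]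

theorem re_trace_blockDiagonal'_mul_add_conjTranspose (ρ : ∀ a, Matrix (k a) (k a) 𝕜)
    (Z : Matrix (Σ a, k a) (Σ a, k a) 𝕜) :
    RCLike.re (blockDiagonal' ρ * (Z + Zᴴ)).trace =
      ∑ a, RCLike.re (ρ a * (blockDiag' Z a + (blockDiag' Z a)ᴴ)).trace := by
  simp only [trace_blockDiagonal'_mul, map_sum, blockDiag'_add, Pi.add_apply,
    blockDiag'_conjTranspose]

theorem sum_re_trace_mul_conjTranspose_mul_self_le {ρ : ∀ a, Matrix (k a) (k a) 𝕜}
    (hρ : ∀ a, (ρ a).PosSemidef) (Z : Matrix (Σ a, k a) (Σ a, k a) 𝕜) :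
    ∑ a, RCLike.re (ρ a * ((blockDiag' Z a)ᴴ * blockDiag' Z a)).trace ≤
      RCLike.re (blockDiagonal' ρ * (Zᴴ * Z)).trace := by
  rw [trace_blockDiagonal'_mul, map_sum]
  exact Finset.sum_le_sum fun a _ =>
    re_trace_mul_le_re_trace_mul (hρ a) (blockDiag'_conjTranspose_mul_self_le Z a)

theorem sum_re_trace_mul_self_mul_conjTranspose_le {σ : ∀ a, Matrix (k a) (k a) 𝕜}
    (hσ : ∀ a, (σ a).PosSemidef) (Z : Matrix (Σ a, k a) (Σ a, k a) 𝕜) :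
    ∑ a, RCLike.re (σ a * (blockDiag' Z a * (blockDiag' Z a)ᴴ)).trace ≤
      RCLike.re (blockDiagonal' σ * (Z * Zᴴ)).trace := by
  simpa only [blockDiag'_conjTranspose, conjTranspose_conjTranspose] using
    sum_re_trace_mul_conjTranspose_mul_self_le hσ Zᴴ

theorem bff_objective_restrict_block_diagonal_general {ρ σ : ∀ a, Matrix (k a) (k a) 𝕜}
    (hρ : ∀ a, (ρ a).PosSemidef) (hσ : ∀ a, (σ a).PosSemidef) {t : ℝ} (ht : t ∈ Set.Icc 0 1)
    (Z : Matrix (Σ a, k a) (Σ a, k a) 𝕜) :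
    ∑ a, bffObjective t (ρ a) (σ a) (blockDiag' Z a) ≤
      bffObjective t (blockDiagonal' ρ) (blockDiagonal' σ) Z := by
  have one_sub_nonneg : 0 ≤ 1 - t := sub_nonneg.mpr ht.2
  have t_nonneg : 0 ≤ t := ht.1
  simp only [bffObjective, Finset.sum_add_distrib, ← Finset.mul_sum]
  rw [re_trace_blockDiagonal'_mul_add_conjTranspose]
  gcongr
  · exact sum_re_trace_mul_conjTranspose_mul_self_le hρ Z
  · exact sum_re_trace_mul_self_mul_conjTranspose_le hσ Z

end Objective

/-- Key step of Proposition 1 in the paper: for a classical-quantum state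
`ρ = Σ_a |a⟩⟨a| ⊗ ρ_a` with `σ_E = Σ_a ρ_a` and `t ∈ (0,1]`, the Brown–Fawzi–Fawzi
objective evaluated at an arbitrary operator `Z` dominates the objective evaluated
at its block-diagonal part, so in the infimum over `Z` one may restrict to
block-diagonal `Z = Σ_a |a⟩⟨a| ⊗ Z_a` without increasing the value. -/
theorem bff_objective_restrict_block_diagonal
    {ι : Type*} [Fintype ι] [DecidableEq ι] (d : ℕ)
    (ρa : ι → Matrix (Fin d) (Fin d) ℂ) (hρa : ∀ a, (ρa a).PosSemidef)
    (ρ : Matrix (ι × Fin d) (ι × Fin d) ℂ)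
    (hρ : ρ = Matrix.of fun pq rs : ι × Fin d =>
      if pq.1 = rs.1 then ρa pq.1 pq.2 rs.2 else 0)
    (σE : Matrix (Fin d) (Fin d) ℂ) (hσE : σE = ∑ a, ρa a)
    (IσE : Matrix (ι × Fin d) (ι × Fin d) ℂ)
    (hIσE : IσE = Matrix.of fun pq rs : ι × Fin d =>
      if pq.1 = rs.1 then σE pq.2 rs.2 else 0)
    (t : ℝ) (ht : t ∈ Set.Ioc (0 : ℝ) 1)
    (Z : Matrix (ι × Fin d) (ι × Fin d) ℂ)
    (Zblk : ι → ι → Matrix (Fin d) (Fin d) ℂ)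
    (hZblk : ∀ a b, Zblk a b = Matrix.of fun i j : Fin d => Z (a, i) (b, j)) :
    ∑ a, ((ρa a * (Zblk a a + (Zblk a a)ᴴ)).trace.re
        + (1 - t) * (ρa a * ((Zblk a a)ᴴ * Zblk a a)).trace.re
        + t * (σE * (Zblk a a * (Zblk a a)ᴴ)).trace.re)
      ≤ (ρ * (Z + Zᴴ)).trace.re
        + (1 - t) * (ρ * (Zᴴ * Z)).trace.re
        + t * (IσE * (Z * Zᴴ)).trace.re := by
  have hσE_psd : σE.PosSemidef := hσE ▸ posSemidef_sum _ fun a _ => hρa a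
  have block_bound := bff_objective_restrict_block_diagonal_general hρa (fun _ => hσE_psd)
    (Set.Ioc_subset_Icc_self ht)
    (Z.submatrix (Equiv.sigmaEquivProd ι (Fin d)) (Equiv.sigmaEquivProd ι (Fin d)))
  rw [← submatrix_sigmaEquivProd_eq_blockDiagonal', ← submatrix_sigmaEquivProd_eq_blockDiagonal',
    bffObjective_submatrix_equiv, ← hρ, ← hIσE] at block_bound
  obtain rfl : Zblk = fun a b => of fun i j => Z (a, i) (b, j) := funext₂ hZblk
  exact block_bound
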